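/- Let n ≥ 1, s ∈ (0,1), and let Ω ⊂ ℝⁿ be a bounded C² domain that is strictly star-shaped with respect to the origin. Let u ∈ C²(Ω) ∩ C¹(cl Ω) ∩ C^{0,1}(ℝⁿ) with u = 0 in Ωᶜ satisfy condition (★), and let 𝔤 = (−Δ)^{s/2}u. Then for every λ ≥ 1, ∫_Ω u(λx) (−Δ)ˢu(x) dx = λ^{(2s−n)/2} ∫_{ℝⁿ} 𝔤(√λ·x) 𝔤(x/√λ) dx. -/

import Mathlib

open MeasureTheory Real Set Metric Bornology Filter
open scoped RealInnerProductSpace ENNReal NNReal Pointwise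

noncomputable section

abbrev En (n : ℕ) : Type := EuclideanSpace ℝ (Fin n)

/-- The normalizing constant `c_{n,s}`. -/
def cK (n : ℕ) (s : ℝ) : ℝ :=
  s * (2 : ℝ) ^ (2 * s) * Real.Gamma (((n : ℝ) + 2 * s) / 2) /
    (Real.pi ^ ((n : ℝ) / 2) * Real.Gamma (1 - s))

/-- The fractional Laplacian `(-Δ)ˢ u (x)`. -/
def fracLap (n : ℕ) (s : ℝ) (u : En n → ℝ) (x : En n) : ℝ :=
  (cK n s / 2) * ∫ y : En n, (2 * u x - u (x + y) - u (x - y)) / ‖y‖ ^ ((n : ℝ) + 2 * s)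

/-- `(-Δ)^{s/2} u (x)`, defined via the non-symmetrized integral. -/
def fracHalf (n : ℕ) (s : ℝ) (u : En n → ℝ) (x : En n) : ℝ :=
  cK n (s / 2) * ∫ z : En n, (u x - u (x + z)) / ‖z‖ ^ ((n : ℝ) + s)

/-- The squared Gagliardo-type seminorm `[u]_s²`. -/
def seminormSsq (n : ℕ) (s : ℝ) (u : En n → ℝ) : ℝ :=
  (cK n s / 2) * ∫ p : En n × En n, (u p.1 - u p.2) ^ 2 / ‖p.1 - p.2‖ ^ ((n : ℝ) + 2 * s)

/-- The squared seminorm `[u]₁² = ∫_Ω |∇u|²`. -/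
def seminorm1sq (n : ℕ) (Ω : Set (En n)) (u : En n → ℝ) : ℝ :=
  ∫ x in Ω, ‖gradient u x‖ ^ 2

/-- The Laplacian as the trace of the Hessian. -/
def lap (n : ℕ) (u : En n → ℝ) (x : En n) : ℝ :=
  ∑ i : Fin n, fderiv ℝ (fun y => fderiv ℝ u y (EuclideanSpace.single i 1)) x
    (EuclideanSpace.single i 1)

/-- The Hessian `D²u(x)` as a continuous bilinear-type map; `‖hess n u x‖` is its operator
norm. -/
def hess (n : ℕ) (u : En n → ℝ) (x : En n) : En n →L[ℝ] En n →L[ℝ] ℝ :=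
  fderiv ℝ (fderiv ℝ u) x

/-- A bounded C² domain `Ω ⊆ ℝⁿ`: a bounded open connected set whose boundary is a C²
hypersurface, described by a global C² defining function with nonvanishing gradient
on the boundary. -/
structure C2Domain (n : ℕ) where
  carrier : Set (En n)
  phi : En n → ℝ
  phi_smooth : ContDiff ℝ 2 phi
  carrier_eq : carrier = {x | phi x < 0}
  grad_ne : ∀ x ∈ frontier carrier, gradient phi x ≠ 0
  bounded : IsBounded carrier
  connected : IsConnected carrier

/-- The outward unit normal `ν` on `∂Ω`. -/
def C2Domain.nu {n : ℕ} (D : C2Domain n) (x : En n) : En n :=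
  ‖gradient D.phi x‖⁻¹ • gradient D.phi x

/-- The normal derivative `∂u/∂ν` at a boundary point (the derivative from inside). -/
def normalDeriv {n : ℕ} (D : C2Domain n) (u : En n → ℝ) (x : En n) : ℝ :=
  fderivWithin ℝ u (closure D.carrier) x (D.nu x)

/-- `Ω` is strictly star-shaped with respect to `z₀`. -/
def C2Domain.StrictlyStarShapedAt {n : ℕ} (D : C2Domain n) (z₀ : En n) : Prop :=
  z₀ ∈ D.carrier ∧ ∀ x ∈ frontier D.carrier, 0 < ⟪x - z₀, D.nu x⟫

/-- `Ω` is strictly star-shaped. -/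
def C2Domain.StrictlyStarShaped {n : ℕ} (D : C2Domain n) : Prop :=
  ∃ z₀, D.StrictlyStarShapedAt z₀

/-- The Pohozaev boundary term `∫_{∂Ω} (∂u/∂ν)² (x·ν(x)) dS`, with `dS` the
`(n-1)`-dimensional Hausdorff measure on `∂Ω`. -/
def pohozaevBoundary {n : ℕ} (D : C2Domain n) (u : En n → ℝ) : ℝ :=
  ∫ x in frontier D.carrier, (normalDeriv D u x) ^ 2 * ⟪x, D.nu x⟫ ∂ μH[(n : ℝ) - 1]

/-- Condition (★). -/
def StarCond (n : ℕ) (s : ℝ) (Ω : Set (En n)) (u : En n → ℝ) : Prop :=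
  ∃ C > 0, ∃ γ ∈ Set.Ioo (0:ℝ) 1, ∀ x ∈ Ω,
    ‖hess n u x‖ ≤ C * infDist x (frontier Ω) ^ (γ - 1) ∧
    |u x| ≤ C * infDist x (frontier Ω) ∧
    |fracLap n s u x| ≤ C * (1 + (if s < 1/2 then 1 else 0)
      + (if s = 1/2 then |Real.log (infDist x (frontier Ω))| else 0)
      + (if 1/2 < s then infDist x (frontier Ω) ^ (1 - 2*s) else 0))

/-!
Write `v x = u (λ x)`. Star-shapedness makes `v` vanish off `Ω`, so the left-hand side is the
integral over `ℝⁿ` of `v (-Δ)ˢ u`. On the Fourier side `(-Δ)ˢ` multiplies by `(2π‖ξ‖)^(2s)`, the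
constant `c_{n,s}` being evaluated by writing powers of `‖z‖` as superpositions of Gaussians. This
turns the integral into that of `𝔤_v 𝔤_u`, where `𝔤_w = (-Δ)^{s/2} w`, and then
`𝔤_v x = λ^s 𝔤_u (λ x)` and the change of variables `x ↦ x / √λ` give the right-hand side.

The delicate point is Fubini: `(-Δ)ˢ u` may blow up at `∂Ω`. But `v` is Lipschitz and vanishes at
`∂Ω`, so `|v x|` is at most a multiple of the distance `d` from `x` to `∂Ω`, while (★) bounds
`d ‖D²u‖`. Hence `v x (2 u x - u (x + y) - u (x - y))` is bounded by a multiple of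
`min (‖y‖²) 1`, and its product with the kernel `‖y‖^(-n - 2s)` is absolutely integrable in
`(x, y)`.
-/

open scoped FourierTransform ContDiff

section Fourier

variable {V : Type*} [NormedAddCommGroup V] [InnerProductSpace ℝ V] [FiniteDimensional ℝ V]
  [MeasurableSpace V] [BorelSpace V]

lemma continuous_fourier {F : Type*} [NormedAddCommGroup F] [NormedSpace ℂ F] {f : V → F}
    (hf : Integrable f) : Continuous (𝓕 f) :=
  VectorFourier.fourierIntegral_continuous Real.continuous_fourierChar continuous_inner hf

lemma coeFn_fourier_toLp_ae_eq_fourier {F : Type*} [NormedAddCommGroup F] [InnerProductSpace ℂ F]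
    [CompleteSpace F] {f : V → F} (hf : Integrable f) (hf2 : MemLp f 2) :
    ((𝓕 (hf2.toLp f) : Lp F 2 (volume : Measure V)) : V → F) =ᵐ[volume] 𝓕 f := by
  -- Both sides define the same tempered distribution, hence have the same test function integrals.
  refine ae_eq_of_integral_contDiff_smul_eq
    ((Lp.memLp (𝓕 (hf2.toLp f))).locallyIntegrable (by norm_num))
    (continuous_fourier hf).locallyIntegrable fun g hg hgs => ?_
  let G : SchwartzMap V ℂ := HasCompactSupport.toSchwartzMap (f := fun x => (g x : ℂ))
    (hgs.comp_left (g := Complex.ofReal) Complex.ofReal_zero) (Complex.ofRealCLM.contDiff.comp hg)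
  have hdistr := congrArg (fun T => T G) (Lp.fourier_toTemperedDistribution_eq (hf2.toLp f))
  simp only [TemperedDistribution.fourier_apply, Lp.toTemperedDistribution_apply] at hdistr
  have hself := VectorFourier.integral_fourierIntegral_smul_eq_flip (𝕜 := ℝ)
    (e := Real.fourierChar) (L := innerₗ V) (f := (G : V → ℂ)) (g := f) (μ := volume) (ν := volume)
    Real.continuous_fourierChar continuous_inner G.integrable hf
  rw [flip_innerₗ] at hself
  calc ∫ x, g x • (𝓕 (hf2.toLp f) : Lp F 2 (volume : Measure V)) x
      = ∫ x, G x • (𝓕 (hf2.toLp f) : Lp F 2 (volume : Measure V)) x :=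
        integral_congr_ae (.of_forall fun x => (Complex.coe_smul (g x) _).symm)
    _ = ∫ x, (𝓕 G) x • hf2.toLp f x := hdistr.symm
    _ = ∫ x, 𝓕 (G : V → ℂ) x • f x := by
        refine integral_congr_ae ?_
        filter_upwards [hf2.coeFn_toLp] with x hx
        rw [hx, SchwartzMap.fourier_coe]
    _ = ∫ x, G x • 𝓕 f x := hself
    _ = ∫ x, g x • 𝓕 f x := integral_congr_ae (.of_forall fun x => Complex.coe_smul (g x) _)

/-- The Fourier transform `∫ x, e^{-2πi⟪x, ξ⟫} u x` of a real-valued function. Inner products of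
its values are taken in `ℂ` as a real inner product space, which keeps Parseval's identity free
of casts. -/
def fourierReal (u : V → ℝ) : V → ℂ := 𝓕 fun x => (u x : ℂ)

lemma fourierReal_const_mul (c : ℝ) (u : V → ℝ) (ξ : V) :
    fourierReal (fun x => c * u x) ξ = c • fourierReal u ξ := by
  simp only [fourierReal, Real.fourier_eq, ← integral_smul]
  refine integral_congr_ae (.of_forall fun x => ?_)
  simp only [Circle.smul_def, smul_eq_mul, Complex.real_smul]
  push_cast
  ring

lemma fourierReal_sub {u v : V → ℝ} (hu : Integrable u) (hv : Integrable v) (ξ : V) :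
    fourierReal (fun x => u x - v x) ξ = fourierReal u ξ - fourierReal v ξ := by
  simp only [fourierReal, Real.fourier_eq, Complex.ofReal_sub, smul_sub]
  exact integral_sub ((Real.fourierIntegral_convergent_iff (μ := volume) ξ).2 hu.ofReal)
    ((Real.fourierIntegral_convergent_iff (μ := volume) ξ).2 hv.ofReal)

lemma fourierReal_comp_add_right (u : V → ℝ) (v ξ : V) :
    fourierReal (fun x => u (x + v)) ξ
      = Complex.exp ((2 * π * ⟪v, ξ⟫ : ℝ) * Complex.I) * fourierReal u ξ := by
  have h := congrFun (VectorFourier.fourierIntegral_comp_add_right Real.fourierChar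
    (volume : Measure V) (innerₗ V) (fun x => (u x : ℂ)) v) ξ
  rwa [innerₗ_apply_apply, Circle.smul_def, Real.fourierChar_apply, smul_eq_mul] at h

lemma fourierReal_integral {Y : Type*} [MeasurableSpace Y] {ν : Measure Y} [SFinite ν]
    {F : V × Y → ℝ} (hF : Integrable F (volume.prod ν)) (ξ : V) :
    fourierReal (fun x => ∫ y, F (x, y) ∂ν) ξ = ∫ y, fourierReal (fun x => F (x, y)) ξ ∂ν := by
  have hchar : AEStronglyMeasurable
      (fun p : V × Y => (Real.fourierChar (-⟪p.1, ξ⟫) : ℂ)) (volume.prod ν) :=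
    AEStronglyMeasurable.comp_fst (f := fun x : V => (Real.fourierChar (-⟪x, ξ⟫) : ℂ))
      (Continuous.aestronglyMeasurable (by fun_prop))
  simp only [fourierReal, Real.fourier_eq, Circle.smul_def, ← integral_complex_ofReal,
    ← integral_smul]
  exact integral_integral_swap
    (hF.ofReal.bdd_mul (c := 1) hchar (.of_forall fun p => (Circle.norm_coe _).le))

lemma inner_fourier_toLp_ae_eq {F : Type*} [NormedAddCommGroup F] [InnerProductSpace ℂ F]
    [CompleteSpace F] {f g : V → F} (hf : Integrable f) (hf2 : MemLp f 2)
    (hg : Integrable g) (hg2 : MemLp g 2) :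
    (fun ξ => inner ℂ ((𝓕 (hf2.toLp f) : Lp F 2 (volume : Measure V)) ξ)
        ((𝓕 (hg2.toLp g) : Lp F 2 (volume : Measure V)) ξ))
      =ᵐ[volume] fun ξ => inner ℂ (𝓕 f ξ) (𝓕 g ξ) := by
  filter_upwards [coeFn_fourier_toLp_ae_eq_fourier hf hf2,
    coeFn_fourier_toLp_ae_eq_fourier hg hg2] with ξ hf hg
  rw [hf, hg]

lemma integrable_inner_fourier {F : Type*} [NormedAddCommGroup F] [InnerProductSpace ℂ F]
    [CompleteSpace F] {f g : V → F} (hf : Integrable f) (hf2 : MemLp f 2)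
    (hg : Integrable g) (hg2 : MemLp g 2) :
    Integrable fun ξ => inner ℂ (𝓕 f ξ) (𝓕 g ξ) :=
  (L2.integrable_inner _ _).congr (inner_fourier_toLp_ae_eq hf hf2 hg hg2)

lemma integral_inner_fourier {F : Type*} [NormedAddCommGroup F] [InnerProductSpace ℂ F]
    [CompleteSpace F] {f g : V → F} (hf : Integrable f) (hf2 : MemLp f 2)
    (hg : Integrable g) (hg2 : MemLp g 2) :
    ∫ ξ, inner ℂ (𝓕 f ξ) (𝓕 g ξ) = ∫ x, inner ℂ (f x) (g x) := by
  rw [← integral_congr_ae (inner_fourier_toLp_ae_eq hf hf2 hg hg2), ← L2.inner_def,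
    Lp.inner_fourier_eq, L2.inner_def]
  refine integral_congr_ae ?_
  filter_upwards [hf2.coeFn_toLp, hg2.coeFn_toLp] with x hf hg
  rw [hf, hg]

lemma integrable_inner_fourierReal {u v : V → ℝ} (hu : Integrable u) (hu2 : MemLp u 2)
    (hv : Integrable v) (hv2 : MemLp v 2) :
    Integrable fun ξ => ⟪fourierReal u ξ, fourierReal v ξ⟫ :=
  (integrable_inner_fourier hu.ofReal hu2.ofReal hv.ofReal hv2.ofReal).re

lemma integral_inner_fourierReal {u v : V → ℝ} (hu : Integrable u) (hu2 : MemLp u 2)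
    (hv : Integrable v) (hv2 : MemLp v 2) :
    ∫ ξ, ⟪fourierReal u ξ, fourierReal v ξ⟫ = ∫ x, u x * v x := by
  have hparseval := integral_inner_fourier (F := ℂ) hu.ofReal hu2.ofReal hv.ofReal hv2.ofReal
  calc ∫ ξ, ⟪fourierReal u ξ, fourierReal v ξ⟫
      = ∫ ξ, RCLike.re (inner ℂ (fourierReal u ξ) (fourierReal v ξ)) := rfl
    _ = RCLike.re (∫ x, inner ℂ (u x : ℂ) (v x : ℂ)) :=
        (integral_re (integrable_inner_fourier hu.ofReal hu2.ofReal hv.ofReal hv2.ofReal)).trans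
          (congrArg _ hparseval)
    _ = RCLike.re ((∫ x, u x * v x : ℝ) : ℂ) := by
        rw [← integral_complex_ofReal]
        refine congrArg _ (integral_congr_ae (.of_forall fun x => ?_))
        simp [mul_comm]
    _ = ∫ x, u x * v x := Complex.ofReal_re _

end Fourier
section Symbol

lemma lintegral_ofReal_eq_of_integral_eq {α : Type*} [MeasurableSpace α] {μ : Measure α}
    {f : α → ℝ} {c : ℝ} (hf : 0 ≤ᵐ[μ] f) (hc : c ≠ 0) (h : ∫ x, f x ∂μ = c) :
    ∫⁻ x, ENNReal.ofReal (f x) ∂μ = ENNReal.ofReal c := by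
  rw [← h, ofReal_integral_eq_lintegral_ofReal (.of_integral_ne_zero (h ▸ hc)) hf]

lemma lintegral_rpow_mul_exp_neg_mul_Ioi {a r : ℝ} (ha : 0 < a) (hr : 0 < r) :
    ∫⁻ t in Ioi (0 : ℝ), ENNReal.ofReal (t ^ (a - 1) * exp (-(r * t)))
      = ENNReal.ofReal ((1 / r) ^ a * Gamma a) := by
  have := Gamma_pos_of_pos ha
  refine lintegral_ofReal_eq_of_integral_eq ?_ (by positivity)
    (Real.integral_rpow_mul_exp_neg_mul_Ioi ha hr)
  filter_upwards [ae_restrict_mem measurableSet_Ioi] with t ht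
  exact mul_nonneg (rpow_nonneg (le_of_lt ht) _) (exp_pos _).le

lemma lintegral_rpow_mul_exp_neg_div_Ioi {a r : ℝ} (ha : 0 < a) (hr : 0 < r) :
    ∫⁻ t in Ioi (0 : ℝ), ENNReal.ofReal (t ^ (-1 - a) * exp (-(r / t)))
      = ENNReal.ofReal ((1 / r) ^ a * Gamma a) := by
  have := Gamma_pos_of_pos ha
  refine lintegral_ofReal_eq_of_integral_eq ?_ (by positivity) ?_
  · filter_upwards [ae_restrict_mem measurableSet_Ioi] with t ht
    exact mul_nonneg (rpow_nonneg (le_of_lt ht) _) (exp_pos _).le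
  · rw [← Real.integral_rpow_mul_exp_neg_mul_Ioi ha hr,
      ← integral_comp_rpow_Ioi _ (p := -1) (by norm_num)]
    refine setIntegral_congr_fun measurableSet_Ioi fun t (ht : 0 < t) => ?_
    simp only [smul_eq_mul, abs_neg, abs_one, one_mul]
    rw [← rpow_mul ht.le, ← mul_assoc, ← rpow_add ht, rpow_neg_one, div_inv_eq_mul]
    congr 2
    ring

lemma lintegral_exp_neg_mul_Ioc {a : ℝ} (ha : 0 ≤ a) {t : ℝ} (ht : 0 < t) :
    ∫⁻ b in Ioc 0 a, ENNReal.ofReal (exp (-(b * t)))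
      = ENNReal.ofReal ((1 - exp (-(a * t))) / t) := by
  have hderiv (b : ℝ) : HasDerivAt (fun b => -(exp (-(b * t)) / t)) (exp (-(b * t))) b := by
    refine ((((hasDerivAt_id b).mul_const t).neg.exp).div_const t).neg.congr_deriv ?_
    simp only [id, Pi.neg_apply, one_mul]
    field_simp
  have hcont : Continuous fun b => exp (-(b * t)) := by fun_prop
  rw [← ofReal_integral_eq_lintegral_ofReal
      (hcont.integrableOn_Icc.mono_set Ioc_subset_Icc_self) (.of_forall fun b => (exp_pos _).le),
    ← intervalIntegral.integral_of_le ha,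
    intervalIntegral.integral_eq_sub_of_hasDerivAt (fun b _ => hderiv b)
      (hcont.intervalIntegrable _ _)]
  congr 1
  simp only [zero_mul, neg_zero, exp_zero]
  ring

lemma lintegral_rpow_sub_one_Ioc {σ : ℝ} (hσ : 0 < σ) {a : ℝ} (ha : 0 ≤ a) :
    ∫⁻ b in Ioc 0 a, ENNReal.ofReal (b ^ (σ - 1)) = ENNReal.ofReal (a ^ σ / σ) := by
  have hint := intervalIntegral.intervalIntegrable_rpow' (a := 0) (b := a) (r := σ - 1)
    (by linarith)
  rw [intervalIntegrable_iff_integrableOn_Ioc_of_le ha] at hint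
  rw [← ofReal_integral_eq_lintegral_ofReal hint, ← intervalIntegral.integral_of_le ha,
    integral_rpow (.inl (by linarith)), sub_add_cancel, zero_rpow hσ.ne', sub_zero]
  filter_upwards [ae_restrict_mem measurableSet_Ioc] with b hb
  exact rpow_nonneg hb.1.le _

lemma lintegral_one_sub_exp_mul_rpow_Ioi {a σ : ℝ} (ha : 0 ≤ a) (h0 : 0 < σ) (h1 : σ < 1) :
    ∫⁻ t in Ioi (0 : ℝ), ENNReal.ofReal (t ^ (-1 - σ) * (1 - exp (-(a * t))))
      = ENNReal.ofReal (a ^ σ / σ * Gamma (1 - σ)) := by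
  calc ∫⁻ t in Ioi (0 : ℝ), ENNReal.ofReal (t ^ (-1 - σ) * (1 - exp (-(a * t))))
      = ∫⁻ t in Ioi (0 : ℝ), ∫⁻ b in Ioc 0 a,
          ENNReal.ofReal (t ^ ((1 - σ) - 1)) * ENNReal.ofReal (exp (-(b * t))) := by
        refine setLIntegral_congr_fun measurableSet_Ioi fun t (ht : 0 < t) => ?_
        rw [lintegral_const_mul' _ _ ENNReal.ofReal_ne_top, lintegral_exp_neg_mul_Ioc ha ht,
          ← ENNReal.ofReal_mul (by positivity)]
        congr 1
        rw [show 1 - σ - 1 = -1 - σ + 1 by ring, rpow_add_one ht.ne']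
        field_simp
    _ = ∫⁻ b in Ioc 0 a, ∫⁻ t in Ioi (0 : ℝ),
          ENNReal.ofReal (t ^ ((1 - σ) - 1)) * ENNReal.ofReal (exp (-(b * t))) :=
        lintegral_lintegral_swap (by fun_prop)
    _ = ∫⁻ b in Ioc 0 a, ENNReal.ofReal (b ^ (σ - 1)) * ENNReal.ofReal (Gamma (1 - σ)) := by
        refine setLIntegral_congr_fun measurableSet_Ioc fun b hb => ?_
        rw [← ENNReal.ofReal_mul (rpow_nonneg hb.1.le _), ← neg_sub 1 σ, rpow_neg hb.1.le,
          ← inv_rpow hb.1.le, ← one_div,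
          ← lintegral_rpow_mul_exp_neg_mul_Ioi (by linarith) hb.1]
        exact setLIntegral_congr_fun measurableSet_Ioi fun t (ht : 0 < t) =>
          (ENNReal.ofReal_mul (by positivity)).symm
    _ = ENNReal.ofReal (a ^ σ / σ * Gamma (1 - σ)) := by
        rw [lintegral_mul_const' _ _ ENNReal.ofReal_ne_top, lintegral_rpow_sub_one_Ioc h0 ha,
          ← ENNReal.ofReal_mul (by positivity)]

variable {V : Type*} [NormedAddCommGroup V] [InnerProductSpace ℝ V] [FiniteDimensional ℝ V]
  [MeasurableSpace V] [BorelSpace V]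

lemma integrable_exp_neg_sq_norm_div {t : ℝ} (ht : 0 < t) :
    Integrable fun z : V => exp (-(‖z‖ ^ 2 / t)) := by
  refine (GaussianFourier.integrable_cexp_neg_mul_sq_norm_add (V := V) (b := (t⁻¹ : ℝ))
    (by simpa using ht) 0 0).norm.congr (.of_forall fun z => ?_)
  dsimp only
  rw [Complex.norm_exp]
  congr 1
  norm_cast
  simp [div_eq_inv_mul]

lemma integral_cos_inner_mul_exp_neg_sq_norm_div {t : ℝ} (ht : 0 < t) (ξ : V) :
    ∫ z : V, cos (2 * π * ⟪z, ξ⟫) * exp (-(‖z‖ ^ 2 / t))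
      = (π * t) ^ ((Module.finrank ℝ V : ℝ) / 2) * exp (-((π * ‖ξ‖) ^ 2 * t)) := by
  have hre : 0 < ((t⁻¹ : ℝ) : ℂ).re := by simpa using ht
  have hint := GaussianFourier.integrable_cexp_neg_mul_sq_norm_add hre (2 * π * Complex.I) ξ
  have hgauss := congrArg Complex.re
    (GaussianFourier.integral_cexp_neg_mul_sq_norm_add hre (2 * π * Complex.I) ξ)
  have hvalue : ((π : ℂ) / (t⁻¹ : ℝ)) ^ (Module.finrank ℝ V / 2 : ℂ)
      * Complex.exp ((2 * π * Complex.I) ^ 2 * ‖ξ‖ ^ 2 / (4 * (t⁻¹ : ℝ)))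
      = ((π * t) ^ ((Module.finrank ℝ V : ℝ) / 2) * exp (-((π * ‖ξ‖) ^ 2 * t)) : ℝ) := by
    rw [Complex.ofReal_mul, Complex.ofReal_cpow (by positivity), Complex.ofReal_exp]
    push_cast
    rw [div_inv_eq_mul, mul_pow _ Complex.I, Complex.I_sq]
    congr 2
    field_simp
    ring
  rw [hvalue, Complex.ofReal_re, ← RCLike.re_to_complex, ← integral_re hint] at hgauss
  rw [← hgauss]
  refine integral_congr_ae (.of_forall fun z => ?_)
  dsimp only
  rw [RCLike.re_to_complex, Complex.exp_re, mul_comm]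
  simp [← Complex.ofReal_pow, -Complex.ofReal_inv, real_inner_comm, div_eq_inv_mul]

lemma lintegral_one_sub_cos_inner_mul_exp_neg_sq_norm_div {t : ℝ} (ht : 0 < t) (ξ : V) :
    ∫⁻ z : V, ENNReal.ofReal ((1 - cos (2 * π * ⟪z, ξ⟫)) * exp (-(‖z‖ ^ 2 / t)))
      = ENNReal.ofReal ((π * t) ^ ((Module.finrank ℝ V : ℝ) / 2)
          * (1 - exp (-((π * ‖ξ‖) ^ 2 * t)))) := by
  have hgauss := integrable_exp_neg_sq_norm_div (V := V) ht
  have hcos : Integrable fun z : V => cos (2 * π * ⟪z, ξ⟫) * exp (-(‖z‖ ^ 2 / t)) :=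
    hgauss.bdd_mul (c := 1) (Continuous.aestronglyMeasurable (by fun_prop))
      (.of_forall fun z => abs_cos_le_one _)
  have hmass : ∫ z : V, exp (-(‖z‖ ^ 2 / t)) = (π * t) ^ ((Module.finrank ℝ V : ℝ) / 2) := by
    simpa using integral_cos_inner_mul_exp_neg_sq_norm_div ht (0 : V)
  have hnonneg (z : V) : 0 ≤ (1 - cos (2 * π * ⟪z, ξ⟫)) * exp (-(‖z‖ ^ 2 / t)) :=
    mul_nonneg (sub_nonneg.2 (cos_le_one _)) (exp_pos _).le
  have hint : Integrable fun z : V => (1 - cos (2 * π * ⟪z, ξ⟫)) * exp (-(‖z‖ ^ 2 / t)) := by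
    simp only [sub_mul, one_mul]
    exact hgauss.sub hcos
  rw [← ofReal_integral_eq_lintegral_ofReal hint (.of_forall hnonneg)]
  simp only [sub_mul, one_mul]
  rw [integral_sub hgauss hcos, hmass, integral_cos_inner_mul_exp_neg_sq_norm_div ht, mul_sub,
    mul_one]

lemma ofReal_div_rpow_mul_ofReal_Gamma {c r β : ℝ} (hc : 0 ≤ c) (hr : 0 < r) (hβ : 0 < β) :
    ENNReal.ofReal (c / r ^ (2 * β)) * ENNReal.ofReal (Gamma β)
      = ∫⁻ t in Ioi (0 : ℝ),
          ENNReal.ofReal (t ^ (-1 - β)) * ENNReal.ofReal (c * exp (-(r ^ 2 / t))) := by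
  rw [← ENNReal.ofReal_mul (by positivity), div_mul_eq_mul_div, mul_div_assoc,
    ENNReal.ofReal_mul hc, div_eq_inv_mul (Gamma _), rpow_mul hr.le, rpow_two,
    ← inv_rpow (by positivity), ← one_div, ← lintegral_rpow_mul_exp_neg_div_Ioi hβ (by positivity),
    ← lintegral_const_mul' _ _ ENNReal.ofReal_ne_top]
  refine setLIntegral_congr_fun measurableSet_Ioi fun t (ht : 0 < t) => ?_
  rw [← ENNReal.ofReal_mul hc, ← ENNReal.ofReal_mul (by positivity), mul_left_comm]

lemma lintegral_one_sub_cos_inner_div_norm_rpow_mul_Gamma [Nontrivial V] {σ : ℝ} (h0 : 0 < σ)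
    (h1 : σ < 1) (ξ : V) :
    (∫⁻ z : V, ENNReal.ofReal
        ((1 - cos (2 * π * ⟪z, ξ⟫)) / ‖z‖ ^ ((Module.finrank ℝ V : ℝ) + 2 * σ)))
      * ENNReal.ofReal (Gamma (Module.finrank ℝ V / 2 + σ))
      = ENNReal.ofReal (π ^ ((Module.finrank ℝ V : ℝ) / 2)
          * ((π * ‖ξ‖) ^ (2 * σ) / σ * Gamma (1 - σ))) := by
  set d : ℝ := ((Module.finrank ℝ V : ℕ) : ℝ)
  have hβ : 0 < d / 2 + σ := add_pos_of_nonneg_of_pos (by positivity) h0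
  have hcos (z : V) : 0 ≤ 1 - cos (2 * π * ⟪z, ξ⟫) := sub_nonneg.2 (cos_le_one _)
  rw [← lintegral_mul_const' _ _ ENNReal.ofReal_ne_top]
  -- Subordination: `Γ(d/2 + σ) / ‖z‖^(d + 2σ)` is a superposition of Gaussians in `z`.
  calc ∫⁻ z : V, ENNReal.ofReal ((1 - cos (2 * π * ⟪z, ξ⟫)) / ‖z‖ ^ (d + 2 * σ))
        * ENNReal.ofReal (Gamma (d / 2 + σ))
      = ∫⁻ z : V, ∫⁻ t in Ioi (0 : ℝ), ENNReal.ofReal (t ^ (-1 - (d / 2 + σ)))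
          * ENNReal.ofReal ((1 - cos (2 * π * ⟪z, ξ⟫)) * exp (-(‖z‖ ^ 2 / t))) := by
        refine lintegral_congr_ae ?_
        filter_upwards [Measure.ae_ne volume 0] with z hz
        rw [← ofReal_div_rpow_mul_ofReal_Gamma (hcos z) (norm_pos_iff.2 hz) hβ, mul_add,
          mul_div_cancel₀ d two_ne_zero]
    _ = ∫⁻ t in Ioi (0 : ℝ), ∫⁻ z : V, ENNReal.ofReal (t ^ (-1 - (d / 2 + σ)))
          * ENNReal.ofReal ((1 - cos (2 * π * ⟪z, ξ⟫)) * exp (-(‖z‖ ^ 2 / t))) :=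
        lintegral_lintegral_swap (by fun_prop)
    _ = ∫⁻ t in Ioi (0 : ℝ), ENNReal.ofReal (π ^ (d / 2))
          * ENNReal.ofReal (t ^ (-1 - σ) * (1 - exp (-((π * ‖ξ‖) ^ 2 * t)))) := by
        refine setLIntegral_congr_fun measurableSet_Ioi fun t (ht : 0 < t) => ?_
        rw [lintegral_const_mul' _ _ ENNReal.ofReal_ne_top,
          lintegral_one_sub_cos_inner_mul_exp_neg_sq_norm_div ht,
          ← ENNReal.ofReal_mul (by positivity), ← ENNReal.ofReal_mul (by positivity),
          mul_rpow pi_pos.le ht.le, show -1 - σ = -1 - (d / 2 + σ) + d / 2 by ring, rpow_add ht]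
        congr 1
        ring
    _ = ENNReal.ofReal (π ^ (d / 2) * ((π * ‖ξ‖) ^ (2 * σ) / σ * Gamma (1 - σ))) := by
        rw [lintegral_const_mul' _ _ ENNReal.ofReal_ne_top,
          lintegral_one_sub_exp_mul_rpow_Ioi (sq_nonneg _) h0 h1,
          ← ENNReal.ofReal_mul (by positivity), ← rpow_two, ← rpow_mul (by positivity)]

lemma integrable_min_norm_rpow_div_norm_rpow [Nontrivial V] {p q : ℝ} (hq : 0 < q) (hpq : q < p) :
    Integrable fun z : V => min (‖z‖ ^ p) 1 / ‖z‖ ^ ((Module.finrank ℝ V : ℝ) + q) := by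
  have hd : 1 ≤ Module.finrank ℝ V := Module.finrank_pos
  have hpow (r : ℝ) (hr : 0 < r) :
      r ^ (Module.finrank ℝ V - 1) * (r ^ ((Module.finrank ℝ V : ℝ) + q))⁻¹ = r ^ (-1 - q) := by
    rw [← rpow_natCast, ← rpow_neg hr.le, ← rpow_add hr, Nat.cast_sub hd]
    congr 1
    push_cast
    ring
  rw [integrable_fun_norm_addHaar (volume : Measure V)
      (f := fun r : ℝ => min (r ^ p) 1 / r ^ ((Module.finrank ℝ V : ℝ) + q)),
    ← Ioc_union_Ioi_eq_Ioi (zero_le_one' ℝ)]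
  refine IntegrableOn.union ?_ ?_
  · have hint := intervalIntegral.intervalIntegrable_rpow' (a := 0) (b := 1) (r := p - q - 1)
      (by linarith)
    rw [intervalIntegrable_iff_integrableOn_Ioc_of_le zero_le_one] at hint
    refine hint.congr_fun (fun r hr => ?_) measurableSet_Ioc
    simp only [smul_eq_mul]
    rw [min_eq_left (rpow_le_one hr.1.le hr.2 (by linarith)), div_eq_mul_inv, mul_left_comm,
      hpow r hr.1, ← rpow_add hr.1]
    congr 1
    ring
  · refine (integrableOn_Ioi_rpow_of_lt (a := -1 - q) (c := 1) (by linarith) one_pos).congr_fun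
      (fun r (hr : 1 < r) => ?_) measurableSet_Ioi
    simp only [smul_eq_mul]
    rw [min_eq_right (one_le_rpow hr.le (by linarith)), one_div, hpow r (by linarith)]

variable {n : ℕ} {σ : ℝ}

lemma cK_pos (h0 : 0 < σ) (h1 : σ < 1) : 0 < cK n σ := by
  have := Gamma_pos_of_pos (sub_pos.2 h1)
  have := Gamma_pos_of_pos (s := ((n : ℝ) + 2 * σ) / 2) (by positivity)
  unfold cK
  positivity

lemma lintegral_one_sub_cos_inner_mul_cK_div (hn : 1 ≤ n) (h0 : 0 < σ) (h1 : σ < 1) (ξ : En n) :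
    ∫⁻ z : En n, ENNReal.ofReal
        ((1 - cos (2 * π * ⟪z, ξ⟫)) * (cK n σ / ‖z‖ ^ ((n : ℝ) + 2 * σ)))
      = ENNReal.ofReal ((2 * π * ‖ξ‖) ^ (2 * σ)) := by
  have : Nonempty (Fin n) := ⟨⟨0, hn⟩⟩
  have hGamma₁ := Gamma_pos_of_pos (sub_pos.2 h1)
  have hGamma₂ := Gamma_pos_of_pos (s := (n : ℝ) / 2 + σ) (by positivity)
  have hsymbol := lintegral_one_sub_cos_inner_div_norm_rpow_mul_Gamma h0 h1 ξ
  rw [finrank_euclideanSpace_fin] at hsymbol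
  set c : ℝ := cK n σ / Gamma (n / 2 + σ) with hc
  have hc0 : 0 ≤ c := (div_pos (cK_pos h0 h1) hGamma₂).le
  have hsplit (z : En n) : (1 - cos (2 * π * ⟪z, ξ⟫)) * (cK n σ / ‖z‖ ^ ((n : ℝ) + 2 * σ))
      = c * ((1 - cos (2 * π * ⟪z, ξ⟫)) / ‖z‖ ^ ((n : ℝ) + 2 * σ) * Gamma (n / 2 + σ)) := by
    rw [hc]
    field_simp
  simp only [hsplit, ENNReal.ofReal_mul hc0, ENNReal.ofReal_mul' hGamma₂.le]
  rw [lintegral_const_mul' _ _ ENNReal.ofReal_ne_top,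
    lintegral_mul_const' _ _ ENNReal.ofReal_ne_top, hsymbol, ← ENNReal.ofReal_mul hc0]
  congr 1
  rw [hc, cK, show ((n : ℝ) + 2 * σ) / 2 = n / 2 + σ by ring, mul_assoc 2 π,
    mul_rpow zero_le_two (by positivity)]
  field_simp

lemma one_sub_cos_inner_mul_cK_div_nonneg (h0 : 0 < σ) (h1 : σ < 1) (z ξ : En n) :
    0 ≤ (1 - cos (2 * π * ⟪z, ξ⟫)) * (cK n σ / ‖z‖ ^ ((n : ℝ) + 2 * σ)) :=
  mul_nonneg (sub_nonneg.2 (cos_le_one _))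
    (div_nonneg (cK_pos h0 h1).le (rpow_nonneg (norm_nonneg z) _))

lemma integrable_one_sub_cos_inner_mul_cK_div (hn : 1 ≤ n) (h0 : 0 < σ) (h1 : σ < 1) (ξ : En n) :
    Integrable fun z : En n =>
      (1 - cos (2 * π * ⟪z, ξ⟫)) * (cK n σ / ‖z‖ ^ ((n : ℝ) + 2 * σ)) := by
  rw [← lintegral_ofReal_ne_top_iff_integrable (Measurable.aestronglyMeasurable (by fun_prop))
      (.of_forall fun z => one_sub_cos_inner_mul_cK_div_nonneg h0 h1 z ξ),
    lintegral_one_sub_cos_inner_mul_cK_div hn h0 h1]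
  exact ENNReal.ofReal_ne_top

theorem integral_one_sub_cos_inner_mul_cK_div (hn : 1 ≤ n) (h0 : 0 < σ) (h1 : σ < 1) (ξ : En n) :
    ∫ z : En n, (1 - cos (2 * π * ⟪z, ξ⟫)) * (cK n σ / ‖z‖ ^ ((n : ℝ) + 2 * σ))
      = (2 * π * ‖ξ‖) ^ (2 * σ) := by
  rw [integral_eq_lintegral_of_nonneg_ae
      (.of_forall fun z => one_sub_cos_inner_mul_cK_div_nonneg h0 h1 z ξ)
      (Measurable.aestronglyMeasurable (by fun_prop)),
    lintegral_one_sub_cos_inner_mul_cK_div hn h0 h1, ENNReal.toReal_ofReal (by positivity)]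

end Symbol

/-- The symmetric second difference `2u(x) - u(x + y) - u(x - y)`, the numerator of the integrand
of `fracLap`. -/
def secondDiff {V : Type*} [AddGroup V] (u : V → ℝ) (x y : V) : ℝ :=
  2 * u x - u (x + y) - u (x - y)

section FourierSecondDiff

variable {V : Type*} [NormedAddCommGroup V] [InnerProductSpace ℝ V] [FiniteDimensional ℝ V]
  [MeasurableSpace V] [BorelSpace V] {u v : V → ℝ}

lemma integrable_secondDiff (hu : Integrable u) (y : V) :
    Integrable fun x => secondDiff u x y :=
  ((hu.const_mul 2).sub (hu.comp_add_right y)).sub (hu.comp_sub_right y)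

lemma memLp_secondDiff {p : ℝ≥0∞} (hu : MemLp u p) (y : V) :
    MemLp (fun x => secondDiff u x y) p :=
  ((hu.const_mul 2).sub (hu.comp_measurePreserving (measurePreserving_add_right volume y))).sub
    (hu.comp_measurePreserving (measurePreserving_sub_right volume y))

lemma fourierReal_secondDiff (hu : Integrable u) (y ξ : V) :
    fourierReal (fun x => secondDiff u x y) ξ
      = (2 * (1 - cos (2 * π * ⟪y, ξ⟫))) • fourierReal u ξ := by
  have htranslate := fourierReal_comp_add_right u (-y) ξ
  simp only [← sub_eq_add_neg, inner_neg_left, mul_neg] at htranslate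
  simp only [secondDiff]
  rw [fourierReal_sub (u := fun x => 2 * u x - u (x + y))
      ((hu.const_mul 2).sub (hu.comp_add_right y)) (hu.comp_sub_right y),
    fourierReal_sub (hu.const_mul 2) (hu.comp_add_right y), fourierReal_const_mul,
    fourierReal_comp_add_right, htranslate, Complex.real_smul, Complex.real_smul]
  push_cast
  rw [Complex.cos]
  ring

lemma integral_mul_secondDiff (hu : Integrable u) (hu2 : MemLp u 2) (hv : Integrable v)
    (hv2 : MemLp v 2) (y : V) :
    ∫ x, v x * secondDiff u x y
      = ∫ ξ, 2 * (1 - cos (2 * π * ⟪y, ξ⟫)) * ⟪fourierReal v ξ, fourierReal u ξ⟫ := by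
  simp only [← integral_inner_fourierReal hv hv2 (integrable_secondDiff hu y)
    (memLp_secondDiff hu2 y), fourierReal_secondDiff hu, real_inner_smul_right]

end FourierSecondDiff

section FourierFracLap

variable {n : ℕ} {s : ℝ} {u v : En n → ℝ}

lemma integrable_fracLap
    (hK : Integrable fun p : En n × En n =>
      secondDiff u p.1 p.2 / ‖p.2‖ ^ ((n : ℝ) + 2 * s)) :
    Integrable (fracLap n s u) :=
  (Integrable.integral_prod_left hK).const_mul _

theorem fourierReal_fracLap (hn : 1 ≤ n) (h0 : 0 < s) (h1 : s < 1) (hu : Integrable u)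
    (hK : Integrable fun p : En n × En n =>
      secondDiff u p.1 p.2 / ‖p.2‖ ^ ((n : ℝ) + 2 * s)) (ξ : En n) :
    fourierReal (fracLap n s u) ξ = (2 * π * ‖ξ‖) ^ (2 * s) • fourierReal u ξ := by
  calc fourierReal (fracLap n s u) ξ
      = (cK n s / 2) •
          fourierReal (fun x => ∫ y, secondDiff u x y / ‖y‖ ^ ((n : ℝ) + 2 * s)) ξ :=
        fourierReal_const_mul _ _ _
    _ = (cK n s / 2) •
          ∫ y, fourierReal (fun x => secondDiff u x y / ‖y‖ ^ ((n : ℝ) + 2 * s)) ξ := by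
        rw [fourierReal_integral hK]
    _ = (cK n s / 2) •
          ∫ y, (2 * (1 - cos (2 * π * ⟪y, ξ⟫)) / ‖y‖ ^ ((n : ℝ) + 2 * s)) • fourierReal u ξ := by
        simp only [div_eq_inv_mul, fourierReal_const_mul, fourierReal_secondDiff hu, smul_smul]
    _ = (∫ y, (1 - cos (2 * π * ⟪y, ξ⟫)) * (cK n s / ‖y‖ ^ ((n : ℝ) + 2 * s)))
          • fourierReal u ξ := by
        rw [integral_smul_const, smul_smul, ← integral_const_mul]
        congr 2 with y
        ring
    _ = (2 * π * ‖ξ‖) ^ (2 * s) • fourierReal u ξ := by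
        rw [integral_one_sub_cos_inner_mul_cK_div hn h0 h1]

lemma integrable_one_sub_cos_inner_mul_cK_div_mul (hn : 1 ≤ n) (h0 : 0 < s) (h1 : s < 1)
    {W : En n → ℝ} (hW : AEStronglyMeasurable W)
    (hint : Integrable fun ξ => (2 * π * ‖ξ‖) ^ (2 * s) * W ξ) :
    Integrable fun p : En n × En n =>
      (1 - cos (2 * π * ⟪p.1, p.2⟫)) * (cK n s / ‖p.1‖ ^ ((n : ℝ) + 2 * s)) * W p.2 := by
  have hmeas : AEStronglyMeasurable (fun p : En n × En n =>
      (1 - cos (2 * π * ⟪p.1, p.2⟫)) * (cK n s / ‖p.1‖ ^ ((n : ℝ) + 2 * s)))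
      (volume.prod volume) :=
    Measurable.aestronglyMeasurable (by fun_prop)
  refine (integrable_prod_iff' (hmeas.mul hW.comp_snd)).2 ⟨.of_forall fun ξ =>
    (integrable_one_sub_cos_inner_mul_cK_div hn h0 h1 ξ).mul_const (W ξ), hint.norm.congr ?_⟩
  refine .of_forall fun ξ => ?_
  have hnorm (y : En n) := norm_of_nonneg (one_sub_cos_inner_mul_cK_div_nonneg h0 h1 y ξ)
  simp only [Pi.mul_apply, norm_mul _ (W ξ), hnorm, integral_mul_const,
    integral_one_sub_cos_inner_mul_cK_div hn h0 h1]
  rw [norm_of_nonneg (by positivity)]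

theorem integral_mul_fracLap_eq (hn : 1 ≤ n) (h0 : 0 < s) (h1 : s < 1)
    (hu : Integrable u) (hu2 : MemLp u 2) (hv : Integrable v) (hv2 : MemLp v 2)
    (hK : Integrable fun p : En n × En n =>
      v p.1 * secondDiff u p.1 p.2 / ‖p.2‖ ^ ((n : ℝ) + 2 * s))
    (hint : Integrable fun ξ =>
      (2 * π * ‖ξ‖) ^ (2 * s) * ⟪fourierReal v ξ, fourierReal u ξ⟫) :
    ∫ x, v x * fracLap n s u x
      = ∫ ξ, (2 * π * ‖ξ‖) ^ (2 * s) * ⟪fourierReal v ξ, fourierReal u ξ⟫ := by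
  have hW : AEStronglyMeasurable fun ξ => ⟪fourierReal v ξ, fourierReal u ξ⟫ :=
    (integrable_inner_fourierReal hv hv2 hu hu2).aestronglyMeasurable
  calc ∫ x, v x * fracLap n s u x
      = ∫ x, ∫ y, cK n s / 2 * (v x * secondDiff u x y / ‖y‖ ^ ((n : ℝ) + 2 * s)) := by
        congr 1 with x
        rw [fracLap, mul_left_comm, ← integral_const_mul, ← integral_const_mul]
        simp only [mul_div_assoc, secondDiff]
    _ = ∫ y, ∫ x, cK n s / 2 * (v x * secondDiff u x y / ‖y‖ ^ ((n : ℝ) + 2 * s)) :=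
        integral_integral_swap (Integrable.const_mul hK _)
    _ = ∫ y, ∫ ξ, (1 - cos (2 * π * ⟪y, ξ⟫)) * (cK n s / ‖y‖ ^ ((n : ℝ) + 2 * s))
          * ⟪fourierReal v ξ, fourierReal u ξ⟫ := by
        congr 1 with y
        rw [integral_const_mul, integral_div, integral_mul_secondDiff hu hu2 hv hv2,
          ← integral_div, ← integral_const_mul]
        congr 1 with ξ
        ring
    _ = ∫ ξ, (∫ y, (1 - cos (2 * π * ⟪y, ξ⟫)) * (cK n s / ‖y‖ ^ ((n : ℝ) + 2 * s)))
          * ⟪fourierReal v ξ, fourierReal u ξ⟫ := by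
        rw [integral_integral_swap
          (integrable_one_sub_cos_inner_mul_cK_div_mul hn h0 h1 hW hint)]
        simp only [integral_mul_const]
    _ = ∫ ξ, (2 * π * ‖ξ‖) ^ (2 * s) * ⟪fourierReal v ξ, fourierReal u ξ⟫ := by
        simp only [integral_one_sub_cos_inner_mul_cK_div hn h0 h1]

end FourierFracLap

section Lipschitz

variable {V : Type*} [NormedAddCommGroup V] {u : V → ℝ} {L : ℝ≥0} {M : ℝ}

lemma abs_sub_add_le_mul_min_norm_one (hL : LipschitzWith L u) (hM : ∀ x, |u x| ≤ M) (x z : V) :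
    |u x - u (x + z)| ≤ max (L : ℝ) (2 * M) * min ‖z‖ 1 := by
  have hA : 0 ≤ max (L : ℝ) (2 * M) := L.coe_nonneg.trans (le_max_left _ _)
  rw [mul_min_of_nonneg _ _ hA, mul_one, le_min_iff]
  constructor
  · refine le_trans ?_ (mul_le_mul_of_nonneg_right (le_max_left _ _) (norm_nonneg z))
    simpa only [Real.dist_eq, dist_self_add_right] using hL.dist_le_mul x (x + z)
  · calc |u x - u (x + z)| ≤ |u x| + |u (x + z)| := abs_sub _ _
      _ ≤ 2 * M := by linarith [hM x, hM (x + z)]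
      _ ≤ max (L : ℝ) (2 * M) := le_max_right _ _

lemma norm_sub_add_div_norm_rpow_le (hL : LipschitzWith L u) (hM : ∀ x, |u x| ≤ M) (r : ℝ)
    (x z : V) :
    ‖(u x - u (x + z)) / ‖z‖ ^ r‖ ≤ max (L : ℝ) (2 * M) * (min ‖z‖ 1 / ‖z‖ ^ r) := by
  rw [norm_div, norm_of_nonneg (rpow_nonneg (norm_nonneg z) r), ← mul_div_assoc]
  gcongr
  exact abs_sub_add_le_mul_min_norm_one hL hM x z

variable [InnerProductSpace ℝ V] [FiniteDimensional ℝ V] [MeasurableSpace V] [BorelSpace V]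
  {s : ℝ}

lemma integrable_mul_comp_add {k χ : V → ℝ} (hk : Integrable k) (hχ : Integrable χ) :
    Integrable fun p : V × V => k p.2 * χ (p.1 + p.2) := by
  have hreflected : Integrable (fun p : V × V => k (-p.2) * χ (p.1 - p.2)) :=
    hk.comp_neg.convolution_integrand (ContinuousLinearMap.mul ℝ ℝ) hχ
  refine (((MeasurePreserving.id (volume : Measure V)).prod
    (Measure.measurePreserving_neg volume)).integrable_comp_of_integrable hreflected).congr
    (.of_forall fun p => ?_)
  simp

variable [Nontrivial V]

lemma integrable_min_norm_div_norm_rpow (h0 : 0 < s) (h1 : s < 1) :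
    Integrable fun z : V => min ‖z‖ 1 / ‖z‖ ^ ((Module.finrank ℝ V : ℝ) + s) := by
  simpa only [rpow_one] using integrable_min_norm_rpow_div_norm_rpow (V := V) h0 h1

lemma integrable_sub_add_div_norm_rpow (h0 : 0 < s) (h1 : s < 1) (hL : LipschitzWith L u)
    (hM : ∀ x, |u x| ≤ M) (x : V) :
    Integrable fun z => (u x - u (x + z)) / ‖z‖ ^ ((Module.finrank ℝ V : ℝ) + s) := by
  have hu := hL.continuous.measurable
  exact ((integrable_min_norm_div_norm_rpow h0 h1).const_mul _).mono'
    (Measurable.aestronglyMeasurable (by fun_prop))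
    (.of_forall (norm_sub_add_div_norm_rpow_le hL hM _ x))

lemma integrable_prod_sub_add_div_norm_rpow (h0 : 0 < s) (h1 : s < 1) (hL : LipschitzWith L u)
    (hsupp : HasCompactSupport u) :
    Integrable fun p : V × V =>
      (u p.1 - u (p.1 + p.2)) / ‖p.2‖ ^ ((Module.finrank ℝ V : ℝ) + s) := by
  obtain ⟨M, hM⟩ := hL.continuous.bounded_above_of_compact_support hsupp
  have hu := hL.continuous.measurable
  set A : ℝ := max (L : ℝ) (2 * M)
  set k : V → ℝ := fun z => A * (min ‖z‖ 1 / ‖z‖ ^ ((Module.finrank ℝ V : ℝ) + s))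
  set χ : V → ℝ := (tsupport u).indicator 1
  have hk : Integrable k := (integrable_min_norm_div_norm_rpow h0 h1).const_mul A
  have hχ : Integrable χ := (integrable_indicator_iff (isClosed_tsupport u).measurableSet).2
    (integrableOn_const (C := (1 : ℝ)) hsupp.isCompact.measure_lt_top.ne)
  -- The difference at `(x, z)` vanishes unless `x` or `x + z` lies in the support of `u`.
  refine ((hχ.mul_prod hk).add (integrable_mul_comp_add hk hχ)).mono'
    (Measurable.aestronglyMeasurable (by fun_prop)) (.of_forall fun ⟨x, z⟩ => ?_)
  have hbound := norm_sub_add_div_norm_rpow_le hL hM ((Module.finrank ℝ V : ℝ) + s) x z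
  have hk0 : 0 ≤ k z := (norm_nonneg _).trans hbound
  have hχ0 (y : V) : 0 ≤ χ y := indicator_nonneg (fun _ _ => zero_le_one) y
  have hχ1 {y : V} (hy : u y ≠ 0) : χ y = 1 :=
    indicator_of_mem (subset_tsupport u hy) _
  have hxk := mul_nonneg (hχ0 x) hk0
  have hzk := mul_nonneg hk0 (hχ0 (x + z))
  dsimp only [Pi.add_apply]
  by_cases hx : u x = 0
  · by_cases hz : u (x + z) = 0
    · rw [hx, hz, sub_zero, zero_div, norm_zero]
      exact add_nonneg hxk hzk
    · rw [hχ1 hz, mul_one]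
      exact hbound.trans (le_add_of_nonneg_left hxk)
  · rw [hχ1 hx, one_mul]
    exact hbound.trans (le_add_of_nonneg_right hzk)

lemma integrable_prod_secondDiff_div_norm_rpow (h0 : 0 < s) (h1 : s < 1) (hL : LipschitzWith L u)
    (hsupp : HasCompactSupport u) :
    Integrable fun p : V × V =>
      secondDiff u p.1 p.2 / ‖p.2‖ ^ ((Module.finrank ℝ V : ℝ) + s) := by
  have hdiff := integrable_prod_sub_add_div_norm_rpow h0 h1 hL hsupp
  refine (hdiff.add (((MeasurePreserving.id (volume : Measure V)).prod
    (Measure.measurePreserving_neg volume)).integrable_comp_of_integrable hdiff)).congr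
    (.of_forall fun p => ?_)
  simp only [Pi.add_apply, Function.comp_apply, Prod.map, id, norm_neg, ← sub_eq_add_neg,
    secondDiff]
  ring

end Lipschitz

section FracHalf

variable {n : ℕ} {s : ℝ} {u v : En n → ℝ} {L : ℝ≥0}

lemma fracHalf_eq_fracLap (hn : 1 ≤ n) (h0 : 0 < s) (h1 : s < 1) (hL : LipschitzWith L u) {M : ℝ}
    (hM : ∀ x, |u x| ≤ M) : fracHalf n s u = fracLap n (s / 2) u := by
  have : Nonempty (Fin n) := ⟨⟨0, hn⟩⟩
  funext x
  have hforward : Integrable fun z => (u x - u (x + z)) / ‖z‖ ^ ((n : ℝ) + s) := by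
    simpa only [finrank_euclideanSpace_fin] using integrable_sub_add_div_norm_rpow h0 h1 hL hM x
  have hbackward : Integrable fun z => (u x - u (x - z)) / ‖z‖ ^ ((n : ℝ) + s) := by
    simpa only [norm_neg, ← sub_eq_add_neg] using hforward.comp_neg
  have hreflect : ∫ z, (u x - u (x - z)) / ‖z‖ ^ ((n : ℝ) + s)
      = ∫ z, (u x - u (x + z)) / ‖z‖ ^ ((n : ℝ) + s) := by
    rw [← integral_neg_eq_self]
    simp only [norm_neg, sub_neg_eq_add]
  have hsplit (z : En n) : (2 * u x - u (x + z) - u (x - z)) / ‖z‖ ^ ((n : ℝ) + s)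
      = (u x - u (x + z)) / ‖z‖ ^ ((n : ℝ) + s) + (u x - u (x - z)) / ‖z‖ ^ ((n : ℝ) + s) := by
    ring
  simp only [fracHalf, fracLap, mul_div_cancel₀ s (two_ne_zero : (2 : ℝ) ≠ 0), hsplit]
  rw [integral_add hforward hbackward, hreflect]
  ring

lemma exists_forall_norm_fracHalf_le (hn : 1 ≤ n) (h0 : 0 < s) (h1 : s < 1)
    (hL : LipschitzWith L u) {M : ℝ} (hM : ∀ x, |u x| ≤ M) : ∃ B, ∀ x, ‖fracHalf n s u x‖ ≤ B := by
  have : Nonempty (Fin n) := ⟨⟨0, hn⟩⟩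
  have hk := integrable_min_norm_div_norm_rpow (V := En n) h0 h1
  rw [finrank_euclideanSpace_fin] at hk
  refine ⟨‖cK n (s / 2)‖ * ∫ z : En n, max (L : ℝ) (2 * M) * (min ‖z‖ 1 / ‖z‖ ^ ((n : ℝ) + s)),
    fun x => (norm_mul_le _ _).trans (mul_le_mul_of_nonneg_left ?_ (norm_nonneg _))⟩
  exact norm_integral_le_of_norm_le (hk.const_mul _)
    (.of_forall (norm_sub_add_div_norm_rpow_le hL hM _ x))

variable (hn : 1 ≤ n) (h0 : 0 < s) (h1 : s < 1) (hL : LipschitzWith L u)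
  (hsupp : HasCompactSupport u)

include hn h0 h1 hL hsupp

lemma integrable_prod_secondDiff_div_norm_rpow_half :
    Integrable fun p : En n × En n =>
      secondDiff u p.1 p.2 / ‖p.2‖ ^ ((n : ℝ) + 2 * (s / 2)) := by
  have : Nonempty (Fin n) := ⟨⟨0, hn⟩⟩
  simpa only [finrank_euclideanSpace_fin, mul_div_cancel₀ s (two_ne_zero : (2 : ℝ) ≠ 0)]
    using integrable_prod_secondDiff_div_norm_rpow h0 h1 hL hsupp

lemma integrable_fracHalf : Integrable (fracHalf n s u) := by
  obtain ⟨M, hM⟩ := hL.continuous.bounded_above_of_compact_support hsupp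
  rw [fracHalf_eq_fracLap hn h0 h1 hL hM]
  exact integrable_fracLap (integrable_prod_secondDiff_div_norm_rpow_half hn h0 h1 hL hsupp)

lemma memLp_two_fracHalf : MemLp (fracHalf n s u) 2 := by
  obtain ⟨M, hM⟩ := hL.continuous.bounded_above_of_compact_support hsupp
  obtain ⟨B, hB⟩ := exists_forall_norm_fracHalf_le hn h0 h1 hL hM
  have hint := integrable_fracHalf hn h0 h1 hL hsupp
  rw [memLp_two_iff_integrable_sq hint.aestronglyMeasurable]
  simp only [sq]
  exact hint.bdd_mul hint.aestronglyMeasurable (.of_forall hB)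

theorem fourierReal_fracHalf (ξ : En n) :
    fourierReal (fracHalf n s u) ξ = (2 * π * ‖ξ‖) ^ s • fourierReal u ξ := by
  obtain ⟨M, hM⟩ := hL.continuous.bounded_above_of_compact_support hsupp
  rw [fracHalf_eq_fracLap hn h0 h1 hL hM, fourierReal_fracLap hn (by linarith) (by linarith)
      (hL.continuous.integrable_of_hasCompactSupport hsupp)
      (integrable_prod_secondDiff_div_norm_rpow_half hn h0 h1 hL hsupp),
    mul_div_cancel₀ s two_ne_zero]

theorem integral_mul_fracLap_eq_integral_fracHalf_mul_fracHalf {K : ℝ≥0} (hK : LipschitzWith K v)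
    (hsupp' : HasCompactSupport v)
    (hint : Integrable fun p : En n × En n =>
      v p.1 * secondDiff u p.1 p.2 / ‖p.2‖ ^ ((n : ℝ) + 2 * s)) :
    ∫ x, v x * fracLap n s u x = ∫ x, fracHalf n s v x * fracHalf n s u x := by
  have hsymbol (ξ : En n) : ⟪fourierReal (fracHalf n s v) ξ, fourierReal (fracHalf n s u) ξ⟫
      = (2 * π * ‖ξ‖) ^ (2 * s) * ⟪fourierReal v ξ, fourierReal u ξ⟫ := by
    rw [fourierReal_fracHalf hn h0 h1 hK hsupp', fourierReal_fracHalf hn h0 h1 hL hsupp,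
      real_inner_smul_left, real_inner_smul_right, ← mul_assoc,
      ← rpow_add_of_nonneg (by positivity) h0.le h0.le, two_mul s]
  have hv1 := integrable_fracHalf hn h0 h1 hK hsupp'
  have hv2 := memLp_two_fracHalf hn h0 h1 hK hsupp'
  have hu1 := integrable_fracHalf hn h0 h1 hL hsupp
  have hu2 := memLp_two_fracHalf hn h0 h1 hL hsupp
  rw [← integral_inner_fourierReal hv1 hv2 hu1 hu2]
  simp only [hsymbol]
  refine integral_mul_fracLap_eq hn h0 h1
    (hL.continuous.integrable_of_hasCompactSupport hsupp)
    (hL.continuous.memLp_of_hasCompactSupport hsupp)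
    (hK.continuous.integrable_of_hasCompactSupport hsupp')
    (hK.continuous.memLp_of_hasCompactSupport hsupp') hint ?_
  simpa only [hsymbol] using integrable_inner_fourierReal hv1 hv2 hu1 hu2

end FracHalf

section StarShaped

variable {n : ℕ} {D : C2Domain n} {z₀ x y : En n}

lemma C2Domain.isOpen_carrier (D : C2Domain n) : IsOpen D.carrier := by
  rw [D.carrier_eq]
  exact isOpen_lt D.phi_smooth.continuous continuous_const

lemma C2Domain.phi_nonneg_iff : 0 ≤ D.phi x ↔ x ∉ D.carrier := by
  rw [D.carrier_eq, mem_ofPred_eq, not_lt]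

lemma C2Domain.phi_eq_zero_of_mem_frontier (hx : x ∈ frontier D.carrier) : D.phi x = 0 := by
  rw [D.carrier_eq] at hx
  exact frontier_lt_subset_eq D.phi_smooth.continuous continuous_const hx

lemma C2Domain.StrictlyStarShapedAt.fderiv_phi_pos (hD : D.StrictlyStarShapedAt z₀)
    (hx : x ∈ frontier D.carrier) : 0 < fderiv ℝ D.phi x (x - z₀) := by
  have hpos := hD.2 x hx
  rw [C2Domain.nu, inner_smul_right, inner_gradient_right, conj_trivial] at hpos
  exact pos_of_mul_pos_right hpos (inv_nonneg.2 (norm_nonneg _))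

/- At a boundary point of the ray the defining function has positive radial derivative, so the ray
is leaving the domain there. -/
lemma C2Domain.StrictlyStarShapedAt.eventually_lineMap_notMem (hD : D.StrictlyStarShapedAt z₀)
    {r : ℝ} (hr : 0 < r) (hmem : AffineMap.lineMap z₀ y r ∉ D.carrier) :
    ∀ᶠ q in nhdsWithin r (Ioi r), AffineMap.lineMap z₀ y q ∉ D.carrier := by
  set γ : ℝ →ᵃ[ℝ] En n := AffineMap.lineMap z₀ y
  have hγ : Continuous γ := AffineMap.lineMap_continuous
  by_cases hcl : γ r ∈ closure D.carrier
  · have hfr : γ r ∈ frontier D.carrier := by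
      rw [D.isOpen_carrier.frontier_eq]
      exact ⟨hcl, hmem⟩
    have hradial : γ r - z₀ = r • (y - z₀) := by simp [γ, AffineMap.lineMap_apply]
    have hderiv : HasDerivAt (D.phi ∘ γ) (fderiv ℝ D.phi (γ r) (y - z₀)) r :=
      ((D.phi_smooth.differentiable two_ne_zero) (γ r)).hasFDerivAt.comp_hasDerivAt r
        AffineMap.hasDerivAt_lineMap
    have hpos : 0 < deriv (D.phi ∘ γ) r := by
      have hpos := hD.fderiv_phi_pos hfr
      rw [hradial, map_smul] at hpos
      rw [hderiv.deriv]
      exact pos_of_mul_pos_right hpos hr.le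
    filter_upwards [self_mem_nhdsWithin, nhdsWithin_le_nhds
      (eventually_nhdsWithin_sign_eq_of_deriv_pos hpos (D.phi_eq_zero_of_mem_frontier hfr))]
      with q hq hsign
    rw [sign_pos (sub_pos.2 hq), sign_eq_one_iff] at hsign
    exact C2Domain.phi_nonneg_iff.1 hsign.le
  · filter_upwards [nhdsWithin_le_nhds
      (hγ.continuousAt.eventually (isClosed_closure.isOpen_compl.mem_nhds hcl))] with q hq
    exact fun h => hq (subset_closure h)

theorem C2Domain.StrictlyStarShapedAt.starConvex (hD : D.StrictlyStarShapedAt z₀) :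
    StarConvex ℝ z₀ D.carrier := by
  rw [starConvex_iff_segment_subset]
  intro y hy
  rw [segment_eq_image_lineMap]
  rintro _ ⟨r, hr, rfl⟩
  by_contra hmem
  set outside : Set ℝ := {q | AffineMap.lineMap z₀ y q ∉ D.carrier}
  have hclosed : IsClosed outside :=
    (D.isOpen_carrier.preimage AffineMap.lineMap_continuous).isClosed_compl
  have hsub : Icc r 1 ⊆ outside := by
    refine (hclosed.inter isClosed_Icc).Icc_subset_of_forall_mem_nhdsWithin hmem
      fun q ⟨hq, hrq, _⟩ => hD.eventually_lineMap_notMem ?_ hq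
    refine (hr.1.trans hrq).lt_of_ne ?_
    rintro rfl
    exact hq (by simpa using hD.1)
  exact hsub ⟨hr.2, le_rfl⟩ (by simpa using hy)

end StarShaped

section NearBoundary

lemma infDist_frontier_eq_infDist_compl {V : Type*} [NormedAddCommGroup V] [NormedSpace ℝ V]
    [FiniteDimensional ℝ V] {Ω : Set V} {x : V} (hx : x ∈ Ω) (hΩ : Ω ≠ univ) :
    infDist x (frontier Ω) = infDist x Ωᶜ := by
  obtain ⟨p, hp, hxp⟩ := exists_mem_frontier_infDist_compl_eq_dist hx hΩ
  refine le_antisymm (hxp ▸ infDist_le_dist_of_mem hp) ?_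
  rw [← infDist_closure (s := Ωᶜ), closure_compl]
  exact infDist_le_infDist_of_subset (fun y hy => hy.2) ⟨p, hp⟩

lemma infDist_frontier_le_diam {X : Type*} [PseudoMetricSpace X] {Ω : Set X} (hb : IsBounded Ω)
    {x : X} (hx : x ∈ Ω) : infDist x (frontier Ω) ≤ diam Ω := by
  rcases (frontier Ω).eq_empty_or_nonempty with hempty | ⟨p, hp⟩
  · simpa only [hempty, infDist_empty] using diam_nonneg
  · rw [← diam_closure]
    exact (infDist_le_dist_of_mem hp).trans
      (dist_le_diam_of_mem hb.closure (subset_closure hx) (frontier_subset_closure hp))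

lemma abs_le_mul_infDist_compl {X : Type*} [PseudoMetricSpace X] {Ω : Set X} {v : X → ℝ}
    {K : ℝ≥0} (hK : LipschitzWith K v) (hv : ∀ x ∉ Ω, v x = 0) (hne : Ωᶜ.Nonempty) (x : X) :
    |v x| ≤ K * infDist x Ωᶜ := by
  have hdist {y : X} (hy : y ∉ Ω) : |v x| ≤ K * dist x y := by
    simpa only [Real.dist_eq, hv y hy, sub_zero] using hK.dist_le_mul x y
  obtain rfl | hK0 := eq_zero_or_pos K
  · obtain ⟨y, hy⟩ := hne
    simpa only [NNReal.coe_zero, zero_mul] using hdist hy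
  · rw [← div_le_iff₀' (NNReal.coe_pos.2 hK0), le_infDist hne]
    exact fun y hy => (div_le_iff₀' (NNReal.coe_pos.2 hK0)).2 (hdist hy)

lemma StarCond.exists_infDist_mul_norm_hess_le {n : ℕ} {s : ℝ} {Ω : Set (En n)} {u : En n → ℝ}
    (hstar : StarCond n s Ω u) (hb : IsBounded Ω) :
    ∃ C, ∀ x ∈ Ω, infDist x (frontier Ω) * ‖hess n u x‖ ≤ C := by
  obtain ⟨C, hC, γ, ⟨hγ, -⟩, hu⟩ := hstar
  refine ⟨C * diam Ω ^ γ, fun x hx => ?_⟩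
  have hd : 0 ≤ infDist x (frontier Ω) := infDist_nonneg
  calc infDist x (frontier Ω) * ‖hess n u x‖
      ≤ infDist x (frontier Ω) * (C * infDist x (frontier Ω) ^ (γ - 1)) := by
        gcongr
        exact (hu x hx).1
    _ = C * infDist x (frontier Ω) ^ γ := by
        rw [mul_left_comm, ← rpow_one_add' hd (by linarith), add_sub_cancel]
    _ ≤ C * diam Ω ^ γ := by
        gcongr
        exact infDist_frontier_le_diam hb hx

variable {V : Type*} [NormedAddCommGroup V] {Ω : Set V} {u v : V → ℝ} {K L : ℝ≥0}

lemma abs_secondDiff_le_of_abs_le {M : ℝ} (hM : ∀ x, |u x| ≤ M) (x y : V) :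
    |secondDiff u x y| ≤ 4 * M := by
  have hx := abs_le.1 (hM x)
  have hadd := abs_le.1 (hM (x + y))
  have hsub := abs_le.1 (hM (x - y))
  rw [secondDiff, abs_le]
  constructor <;> linarith [hx.1, hx.2, hadd.1, hadd.2, hsub.1, hsub.2]

lemma abs_secondDiff_le_of_lipschitzWith (hL : LipschitzWith L u) (x y : V) :
    |secondDiff u x y| ≤ 2 * L * ‖y‖ := by
  have hadd := hL.dist_le_mul x (x + y)
  have hsub := hL.dist_le_mul x (x - y)
  rw [Real.dist_eq, dist_self_add_right] at hadd
  rw [Real.dist_eq, dist_self_sub_right] at hsub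
  calc |secondDiff u x y| = |(u x - u (x + y)) + (u x - u (x - y))| := by
        rw [secondDiff]
        ring_nf
    _ ≤ |u x - u (x + y)| + |u x - u (x - y)| := abs_add_le _ _
    _ ≤ 2 * L * ‖y‖ := by linarith

variable [NormedSpace ℝ V]

lemma abs_secondDiff_le_of_norm_fderiv_fderiv_le {x y : V} {H : ℝ}
    (hu : ∀ z ∈ closedBall x ‖y‖, ContDiffAt ℝ 2 u z)
    (hH : ∀ z ∈ closedBall x ‖y‖, ‖fderiv ℝ (fderiv ℝ u) z‖ ≤ H) :
    |secondDiff u x y| ≤ 2 * H * ‖y‖ ^ 2 := by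
  have hconv := convex_closedBall x ‖y‖
  have hx : x ∈ closedBall x ‖y‖ := mem_closedBall_self (norm_nonneg y)
  have hH0 : 0 ≤ H := (norm_nonneg (fderiv ℝ (fderiv ℝ u) x)).trans (hH x hx)
  have hderiv (z) (hz : z ∈ closedBall x ‖y‖) : ‖fderiv ℝ u z - fderiv ℝ u x‖ ≤ H * ‖y‖ := by
    refine (hconv.norm_image_sub_le_of_norm_fderiv_le (fun w hw =>
      ((hu w hw).fderiv_right (m := 1) le_rfl).differentiableAt one_ne_zero) hH hx hz).trans ?_
    gcongr
    simpa only [mem_closedBall, dist_eq_norm] using hz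
  have htaylor (z) (hz : z ∈ closedBall x ‖y‖) :
      |u z - u x - fderiv ℝ u x (z - x)| ≤ H * ‖y‖ * ‖z - x‖ :=
    hconv.norm_image_sub_le_of_norm_fderiv_le'
      (fun w hw => (hu w hw).differentiableAt two_ne_zero) hderiv hx hz
  have hadd := htaylor (x + y) (by simp)
  have hsub := htaylor (x - y) (by simp)
  rw [add_sub_cancel_left] at hadd
  rw [sub_sub_cancel_left, norm_neg, map_neg] at hsub
  calc |secondDiff u x y|
      = |(u (x + y) - u x - fderiv ℝ u x y) + (u (x - y) - u x - -fderiv ℝ u x y)| := by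
        rw [secondDiff, ← abs_neg]
        ring_nf
    _ ≤ H * ‖y‖ * ‖y‖ + H * ‖y‖ * ‖y‖ := (abs_add_le _ _).trans (add_le_add hadd hsub)
    _ = 2 * H * ‖y‖ ^ 2 := by ring

lemma abs_secondDiff_le_of_norm_lt_infDist_compl_div_two (hΩ : IsOpen Ω)
    (hu : ContDiffOn ℝ 2 u Ω) {C : ℝ}
    (hC : ∀ x ∈ Ω, infDist x Ωᶜ * ‖fderiv ℝ (fderiv ℝ u) x‖ ≤ C) {x y : V}
    (hy : ‖y‖ < infDist x Ωᶜ / 2) :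
    |secondDiff u x y| ≤ 2 * (C / (infDist x Ωᶜ / 2)) * ‖y‖ ^ 2 := by
  have hd : 0 < infDist x Ωᶜ / 2 := (norm_nonneg y).trans_lt hy
  have hball (z) (hz : z ∈ closedBall x ‖y‖) : z ∈ Ω ∧ infDist x Ωᶜ / 2 ≤ infDist z Ωᶜ := by
    rw [mem_closedBall'] at hz
    have htri := infDist_le_infDist_add_dist (s := Ωᶜ) (x := x) (y := z)
    have hlt : dist x z < infDist x Ωᶜ := by linarith
    exact ⟨not_not.1 (notMem_of_dist_lt_infDist hlt), by linarith⟩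
  refine abs_secondDiff_le_of_norm_fderiv_fderiv_le
    (fun z hz => hu.contDiffAt (hΩ.mem_nhds (hball z hz).1)) fun z hz => ?_
  rw [le_div_iff₀' hd]
  refine le_trans ?_ (hC z (hball z hz).1)
  gcongr
  exact (hball z hz).2

/- The weight `v x ≲ dist(x, ∂Ω)` compensates the blow-up of the Hessian at short range; at long
range `dist(x, ∂Ω) ≲ ‖y‖`. -/
lemma abs_mul_secondDiff_le_mul_sq (hΩ : IsOpen Ω) (hne : Ωᶜ.Nonempty)
    (hu : ContDiffOn ℝ 2 u Ω) (hL : LipschitzWith L u) (hK : LipschitzWith K v)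
    (hv : ∀ x ∉ Ω, v x = 0) {C : ℝ}
    (hC : ∀ x ∈ Ω, infDist x Ωᶜ * ‖fderiv ℝ (fderiv ℝ u) x‖ ≤ C) {x : V} (hx : x ∈ Ω) (y : V) :
    |v x * secondDiff u x y| ≤ 4 * K * (C + L) * ‖y‖ ^ 2 := by
  have hd : 0 ≤ infDist x Ωᶜ := infDist_nonneg
  have hC0 : 0 ≤ C := (mul_nonneg hd (norm_nonneg (fderiv ℝ (fderiv ℝ u) x))).trans (hC x hx)
  have hvx := abs_le_mul_infDist_compl hK hv hne x
  rw [abs_mul]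
  rcases lt_or_ge ‖y‖ (infDist x Ωᶜ / 2) with hnear | hfar
  · have hd0 : 0 < infDist x Ωᶜ := by linarith [norm_nonneg y]
    calc |v x| * |secondDiff u x y|
        ≤ (K * infDist x Ωᶜ) * (2 * (C / (infDist x Ωᶜ / 2)) * ‖y‖ ^ 2) := by
          gcongr
          exact abs_secondDiff_le_of_norm_lt_infDist_compl_div_two hΩ hu hC hnear
      _ = 4 * K * C * ‖y‖ ^ 2 := by
          field_simp
          ring
      _ ≤ 4 * K * (C + L) * ‖y‖ ^ 2 := by
          gcongr
          exact le_add_of_nonneg_right L.coe_nonneg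
  · calc |v x| * |secondDiff u x y| ≤ (K * (2 * ‖y‖)) * (2 * L * ‖y‖) := by
          gcongr
          · exact hvx.trans (by gcongr; linarith)
          · exact abs_secondDiff_le_of_lipschitzWith hL x y
      _ = 4 * K * L * ‖y‖ ^ 2 := by ring
      _ ≤ 4 * K * (C + L) * ‖y‖ ^ 2 := by
          gcongr
          exact le_add_of_nonneg_left hC0

lemma exists_abs_mul_secondDiff_le_mul_min_norm_sq_one (hΩ : IsOpen Ω) (hne : Ωᶜ.Nonempty)
    (hu : ContDiffOn ℝ 2 u Ω) (hL : LipschitzWith L u) (hK : LipschitzWith K v)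
    (hv : ∀ x ∉ Ω, v x = 0) {M M' : ℝ} (hM : ∀ x, |u x| ≤ M) (hM' : ∀ x, |v x| ≤ M')
    (hC : ∃ C, ∀ x ∈ Ω, infDist x Ωᶜ * ‖fderiv ℝ (fderiv ℝ u) x‖ ≤ C) :
    ∃ B, ∀ x ∈ Ω, ∀ y, |v x * secondDiff u x y| ≤ B * min (‖y‖ ^ 2) 1 := by
  obtain ⟨C, hC⟩ := hC
  have hM0 : 0 ≤ M' * (4 * M) := by
    have := (abs_nonneg _).trans (hM 0)
    have := (abs_nonneg _).trans (hM' 0)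
    positivity
  refine ⟨max (4 * K * (C + L)) (M' * (4 * M)), fun x hx y => ?_⟩
  rw [mul_min_of_nonneg _ _ (hM0.trans (le_max_right _ _)), mul_one, le_min_iff]
  constructor
  · refine (abs_mul_secondDiff_le_mul_sq hΩ hne hu hL hK hv hC hx y).trans ?_
    gcongr
    exact le_max_left _ _
  · rw [abs_mul]
    refine le_max_of_le_right (mul_le_mul (hM' x) (abs_secondDiff_le_of_abs_le hM x y)
      (abs_nonneg _) ((abs_nonneg _).trans (hM' x)))

end NearBoundary

section Kernel

variable {V : Type*} [NormedAddCommGroup V] [InnerProductSpace ℝ V] [FiniteDimensional ℝ V]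
  [MeasurableSpace V] [BorelSpace V] [Nontrivial V] {Ω : Set V} {u v : V → ℝ} {K L : ℝ≥0} {s : ℝ}

lemma integrable_prod_mul_secondDiff_div_norm_rpow (h0 : 0 < s) (h1 : s < 1) (hΩ : IsOpen Ω)
    (hb : IsBounded Ω) (hu : ContDiffOn ℝ 2 u Ω) (hL : LipschitzWith L u)
    (hsupp : HasCompactSupport u) (hK : LipschitzWith K v) (hv : ∀ x ∉ Ω, v x = 0)
    (hC : ∃ C, ∀ x ∈ Ω, infDist x Ωᶜ * ‖fderiv ℝ (fderiv ℝ u) x‖ ≤ C) :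
    Integrable fun p : V × V =>
      v p.1 * secondDiff u p.1 p.2 / ‖p.2‖ ^ ((Module.finrank ℝ V : ℝ) + 2 * s) := by
  have hne : Ωᶜ.Nonempty := nonempty_compl.2 fun h => NormedSpace.unbounded_univ ℝ V (h ▸ hb)
  obtain ⟨M, hM⟩ := hL.continuous.bounded_above_of_compact_support hsupp
  obtain ⟨M', hM'⟩ := hK.continuous.bounded_above_of_compact_support
    (.intro hb.isCompact_closure fun x hx => hv x fun h => hx (subset_closure h))
  obtain ⟨B, hB⟩ :=
    exists_abs_mul_secondDiff_le_mul_min_norm_sq_one hΩ hne hu hL hK hv hM hM' hC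
  have hχ : Integrable (Ω.indicator (1 : V → ℝ)) := (integrable_indicator_iff hΩ.measurableSet).2
    (integrableOn_const (C := (1 : ℝ)) hb.measure_lt_top.ne)
  have hk := integrable_min_norm_rpow_div_norm_rpow (V := V) (p := 2) (q := 2 * s)
    (by linarith) (by linarith)
  have humeas := hL.continuous.measurable
  have hvmeas := hK.continuous.measurable
  refine ((hχ.mul_prod hk).const_mul B).mono'
    (Measurable.aestronglyMeasurable (by unfold secondDiff; fun_prop)) (.of_forall fun ⟨x, y⟩ => ?_)
  dsimp only
  by_cases hx : x ∈ Ω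
  · rw [indicator_of_mem hx, Pi.one_apply, one_mul, ← mul_div_assoc, norm_div, norm_eq_abs,
      norm_of_nonneg (rpow_nonneg (norm_nonneg y) _), rpow_two]
    gcongr
    exact hB x hx y
  · simp [hv x hx, indicator_of_notMem hx]

end Kernel

section Scaling

lemma integral_comp_smul_mul {V : Type*} [NormedAddCommGroup V] [NormedSpace ℝ V]
    [FiniteDimensional ℝ V] [MeasurableSpace V] [BorelSpace V] (μ : Measure V)
    [μ.IsAddHaarMeasure] (f g : V → ℝ) {c : ℝ} (hc : 0 < c) :
    ∫ x, f (c • x) * g x ∂μ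
      = c ^ (-(Module.finrank ℝ V : ℝ) / 2) * ∫ x, f (√c • x) * g ((√c)⁻¹ • x) ∂μ := by
  have hscale := μ.integral_comp_smul (fun x => f (c • x) * g x) (√c)⁻¹
  simp only [smul_smul, ← div_eq_mul_inv, div_sqrt] at hscale
  rw [hscale, smul_eq_mul, ← mul_assoc, abs_of_nonneg (by positivity), inv_pow, inv_inv,
    sqrt_eq_rpow, ← rpow_natCast, ← rpow_mul hc.le, ← rpow_add hc]
  ring_nf
  rw [rpow_zero, one_mul]

lemma fracHalf_comp_smul {n : ℕ} (s : ℝ) (u : En n → ℝ) {c : ℝ} (hc : 0 < c) (x : En n) :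
    fracHalf n s (fun y => u (c • y)) x = c ^ s * fracHalf n s u (c • x) := by
  have hscale := Measure.integral_comp_smul_of_nonneg (volume : Measure (En n))
    (fun z => (u (c • x) - u (c • x + z)) / ‖z‖ ^ ((n : ℝ) + s)) c (hR := hc.le)
  have hkernel (z : En n) : (u (c • x) - u (c • (x + z))) / ‖z‖ ^ ((n : ℝ) + s)
      = c ^ ((n : ℝ) + s) * ((u (c • x) - u (c • x + c • z)) / ‖c • z‖ ^ ((n : ℝ) + s)) := by
    rw [smul_add, norm_smul, norm_of_nonneg hc.le, mul_rpow hc.le (norm_nonneg _)]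
    field_simp
  rw [finrank_euclideanSpace_fin, smul_eq_mul] at hscale
  simp only [fracHalf, hkernel]
  rw [integral_const_mul, hscale, rpow_add hc, rpow_natCast]
  field_simp

end Scaling

theorem pohozaev_step_B_general {n : ℕ} (hn : 1 ≤ n) {s : ℝ} (hs : s ∈ Ioo (0 : ℝ) 1)
    {Ω : Set (En n)} (hΩ : IsOpen Ω) (hb : IsBounded Ω) (hstar : StarConvex ℝ 0 Ω)
    {u : En n → ℝ} (hu : ContDiffOn ℝ 2 u Ω) {L : ℝ≥0} (hL : LipschitzWith L u)
    (hzero : ∀ x ∉ Ω, u x = 0)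
    (hhess : ∃ C, ∀ x ∈ Ω, infDist x (frontier Ω) * ‖hess n u x‖ ≤ C) {lam : ℝ} (hlam : 1 ≤ lam) :
    ∫ x in Ω, u (lam • x) * fracLap n s u x = lam ^ ((2 * s - n) / 2) *
      ∫ x, fracHalf n s u (√lam • x) * fracHalf n s u ((√lam)⁻¹ • x) := by
  have : Nonempty (Fin n) := ⟨⟨0, hn⟩⟩
  obtain ⟨h0, h1⟩ := hs
  have hlam0 : 0 < lam := by linarith
  have hsupp {w : En n → ℝ} (hw : ∀ x ∉ Ω, w x = 0) : HasCompactSupport w :=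
    .intro hb.isCompact_closure fun x hx => hw x fun h => hx (subset_closure h)
  set v : En n → ℝ := fun x => u (lam • x)
  have hv : ∀ x ∉ Ω, v x = 0 := fun x hx => hzero _ fun h => hx <| by
    simpa only [inv_smul_smul₀ hlam0.ne'] using
      hstar.smul_mem h (inv_nonneg.2 hlam0.le) (inv_le_one_of_one_le₀ hlam)
  have hK : LipschitzWith (L * ‖lam‖₊) v := hL.comp (lipschitzWith_smul lam)
  have hΩ' : Ω ≠ univ := fun h => NormedSpace.unbounded_univ ℝ (En n) (h ▸ hb)
  have hkernel := integrable_prod_mul_secondDiff_div_norm_rpow h0 h1 hΩ hb hu hL (hsupp hzero) hK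
    hv (hhess.imp fun C hC x hx => infDist_frontier_eq_infDist_compl hx hΩ' ▸ hC x hx)
  rw [finrank_euclideanSpace_fin] at hkernel
  calc ∫ x in Ω, v x * fracLap n s u x
      = ∫ x, v x * fracLap n s u x := setIntegral_eq_integral_of_forall_compl_eq_zero
        fun x hx => by rw [hv x hx, zero_mul]
    _ = ∫ x, fracHalf n s v x * fracHalf n s u x :=
        integral_mul_fracLap_eq_integral_fracHalf_mul_fracHalf hn h0 h1 hL (hsupp hzero) hK
          (hsupp hv) hkernel
    _ = lam ^ s * ∫ x, fracHalf n s u (lam • x) * fracHalf n s u x := by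
        simp only [v, fracHalf_comp_smul s u hlam0, mul_assoc, integral_const_mul]
    _ = _ := by
        rw [integral_comp_smul_mul volume _ _ hlam0, ← mul_assoc, ← rpow_add hlam0,
          finrank_euclideanSpace_fin]
        ring_nf

/-- Step (B) in the proof of Theorem 2.4: for `λ ≥ 1`,
`∫_Ω u(λx)(-Δ)ˢu(x) dx = λ^{(2s-n)/2} ∫_{ℝⁿ} 𝔤(√λ x) 𝔤(x/√λ) dx`, where
`𝔤 = (-Δ)^{s/2}u`. -/
theorem pohozaev_step_B (n : ℕ) (hn : 1 ≤ n) (s : ℝ) (hs : s ∈ Set.Ioo (0:ℝ) 1)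
    (D : C2Domain n) (hD : D.StrictlyStarShapedAt 0)
    (u : En n → ℝ)
    (hu2 : ContDiffOn ℝ 2 u D.carrier)
    (hu1 : ContDiffOn ℝ 1 u (closure D.carrier))
    (hlip : ∃ L : ℝ≥0, LipschitzWith L u)
    (hzero : ∀ x ∉ D.carrier, u x = 0)
    (hstar : StarCond n s D.carrier u) :
    ∀ lam : ℝ, 1 ≤ lam →
      (∫ x in D.carrier, u (lam • x) * fracLap n s u x)
        = lam ^ ((2 * s - n) / 2) *
            ∫ x : En n,
              fracHalf n s u (Real.sqrt lam • x) * fracHalf n s u ((Real.sqrt lam)⁻¹ • x) := by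
  obtain ⟨L, hL⟩ := hlip
  exact fun lam hlam => pohozaev_step_B_general hn hs D.isOpen_carrier D.bounded hD.starConvex hu2
    hL hzero (hstar.exists_infDist_mul_norm_hess_le D.bounded) hlam
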